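/- arXiv:2505.03344 — 4 statements merged into one kernel-verified Lean document; each statement's English description precedes it below -/
import Mathlib

section
/- Let ε ∈ (0,1), c > 1, and let ψ be the dual-clip kernel. Fix A ∈ ℝ and ρ₀ > 0, and suppose the map ρ ↦ ψ(ρ, A) is differentiable at ρ₀ with derivative d. Then the gradient with respect to the log-probability is bounded: |ρ₀·d| ≤ (1+ε)·|A| if A ≥ 0, and |ρ₀·d| ≤ c·|A| if A < 0. -/
/-!
For fixed `A` the kernel is `min ρ (1 + ε) * A` when `0 ≤ A` and `min (max ρ (1 - ε)) c * A` when
`A < 0`. Both are `|A|`-Lipschitz in `ρ` and constant for `ρ ≥ K`, with `K = 1 + ε` and `K = c`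
respectively. So the derivative vanishes beyond `K`, and up to `K` it is at most `|A|` in absolute
value; either way `|ρ₀ * d| ≤ K * |A|`.
-/

/-- `clip ρ a b = max a (min ρ b)`. -/
noncomputable def clipRatio (ρ a b : ℝ) : ℝ := max a (min ρ b)

/-- The dual-clip kernel: `ψ(ρ, A) = min(ρ·A, clip(ρ,1−ε,1+ε)·A)` if `A ≥ 0`, and
`ψ(ρ, A) = max(min(ρ·A, clip(ρ,1−ε,1+ε)·A), c·A)` if `A < 0`. -/
noncomputable def dualClipKernel (ε c ρ A : ℝ) : ℝ :=
  if 0 ≤ A then min (ρ * A) (clipRatio ρ (1 - ε) (1 + ε) * A)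
  else max (min (ρ * A) (clipRatio ρ (1 - ε) (1 + ε) * A)) (c * A)

theorem dualClipKernel_of_nonneg {ε A : ℝ} (c r : ℝ) (hε : 0 < ε) (hA : 0 ≤ A) :
    dualClipKernel ε c r A = min r (1 + ε) * A := by
  rw [dualClipKernel, if_pos hA, ← min_mul_of_nonneg _ _ hA, clipRatio]
  congr 1
  grind

theorem dualClipKernel_of_neg {ε c A : ℝ} (r : ℝ) (hε : 0 < ε) (hA : A < 0) :
    dualClipKernel ε c r A = min (max r (1 - ε)) c * A := by
  have hanti : Antitone fun x : ℝ => x * A := fun x y h => mul_le_mul_of_nonpos_right h hA.le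
  have hmax (x y : ℝ) : min (x * A) (y * A) = max x y * A := hanti.map_max.symm
  have hmin (x y : ℝ) : max (x * A) (y * A) = min x y * A := hanti.map_min.symm
  rw [dualClipKernel, if_neg hA.not_ge, hmax, hmin, clipRatio]
  congr 2
  grind

/-- The log-derivative `x * f' x` of a `B`-Lipschitz function that is constant on `[K, ∞)` is
bounded by `K * B`. -/
theorem abs_mul_deriv_le_of_lipschitz_of_const {f : ℝ → ℝ} {B K x d : ℝ} (hB : 0 ≤ B) (hK : 0 ≤ K)
    (hlip : ∀ y z, |f y - f z| ≤ B * |y - z|) (hconst : ∀ y, K ≤ y → f y = f K)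
    (hx : 0 < x) (hd : HasDerivAt f d x) : |x * d| ≤ K * B := by
  rcases lt_or_ge K x with h | h
  · have hloc : f =ᶠ[nhds x] fun _ => f K := by
      filter_upwards [lt_mem_nhds h] with y hy using hconst y hy.le
    have hd0 : d = 0 := hd.unique ((hasDerivAt_const x (f K)).congr_of_eventuallyEq hloc)
    rw [hd0, mul_zero, abs_zero]
    positivity
  · have hdB : |d| ≤ B := by
      simpa using hd.le_of_lip' hB (Filter.Eventually.of_forall fun y => hlip y x)
    rw [abs_mul, abs_of_pos hx]
    gcongr

/-- bounded gradients w.r.t. the log-probability: for `ε ∈ (0,1)`,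
`c > 1`, fix `A` and `ρ₀ > 0`, and suppose `ρ ↦ ψ(ρ, A)` is differentiable at `ρ₀`
with derivative `d`.  The gradient w.r.t. the log-probability, `ρ₀·d`, satisfies
`|ρ₀·d| ≤ (1+ε)·|A|` if `A ≥ 0`, and `|ρ₀·d| ≤ c·|A|` if `A < 0`. -/
theorem dualClip_gradient_bounds
    (ε c : ℝ) (hε : ε ∈ Set.Ioo (0 : ℝ) 1) (hc : 1 < c)
    (A ρ₀ d : ℝ) (hρ₀ : 0 < ρ₀)
    (hd : HasDerivAt (fun r => dualClipKernel ε c r A) d ρ₀) :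
    (0 ≤ A → |ρ₀ * d| ≤ (1 + ε) * |A|) ∧ (A < 0 → |ρ₀ * d| ≤ c * |A|) := by
  obtain ⟨hε0, -⟩ := hε
  constructor
  · intro hA
    simp only [dualClipKernel_of_nonneg c _ hε0 hA] at hd
    refine abs_mul_deriv_le_of_lipschitz_of_const (abs_nonneg A) (by linarith)
      (fun y z => ?_) (fun y hy => ?_) hρ₀ hd
    · rw [← sub_mul, abs_mul, mul_comm]
      refine mul_le_mul_of_nonneg_left ?_ (abs_nonneg A)
      grind
    · rw [min_eq_right hy, min_self]
  · intro hA
    simp only [dualClipKernel_of_neg _ hε0 hA] at hd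
    refine abs_mul_deriv_le_of_lipschitz_of_const (abs_nonneg A) (by linarith)
      (fun y z => ?_) (fun y hy => ?_) hρ₀ hd
    · rw [← sub_mul, abs_mul, mul_comm]
      refine mul_le_mul_of_nonneg_left ?_ (abs_nonneg A)
      grind
    · rw [min_eq_right (le_max_of_le_left hy), min_eq_right (le_max_left _ _)]
end

section
/- Let G ≥ 1, let π_old : Fin G → ℝ be a probability vector with π_old i ≥ π_min for some π_min > 0, let Â : Fin G → ℝ satisfy |Â i| ≤ A_max, and define L(π) = (1/G)·∑_i (Â i / π_old i)·(π i). Then for any two probability vectors π, π' on Fin G with π' strictly positive, |L(π) − L(π')| ≤ (A_max/π_min)·√(2·KL(π ‖ π')), where KL(π ‖ π') = ∑_i π i · log(π i / π' i) with the convention that a term is 0 when π i = 0. -/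
/-!
The difference of surrogates is at most `(Amax / πmin) * (1 / G) * ∑ |π i - π' i|`, so a
Pinsker-type bound is needed. For `G = 1` both vectors are equal. For `G ≥ 2` the factor `1 / G`
leaves room for the non-sharp bound `(∑ |π i - π' i|) ^ 2 ≤ 4 * KL`, which goes through the squared
Hellinger distance `∑ (√(π i) - √(π' i)) ^ 2`: it is at most the divergence because
`log x ≤ x - 1` at `x = √(π' i / π i)`, and it controls the `ℓ¹` distance by Cauchy–Schwarz
applied to `|p - q| = |√p - √q| * (√p + √q)`.
-/

/-- Finite-alphabet Kullback–Leibler divergence `KL(π ‖ π') = ∑ i, π i · log(π i / π' i)`,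
with the convention that a term is `0` when `π i = 0`. -/
noncomputable def finKL (G : ℕ) (π π' : Fin G → ℝ) : ℝ :=
  ∑ i, if π i = 0 then 0 else π i * Real.log (π i / π' i)

/-- The termwise comparison of Hellinger distance and divergence. The correction `p - q` sums to
zero over probability vectors. -/
lemma sq_sqrt_sub_sqrt_le_klTerm {p q : ℝ} (hp : 0 ≤ p) (hq : 0 < q) :
    (√p - √q) ^ 2 + (p - q) ≤ if p = 0 then 0 else p * Real.log (p / q) := by
  split_ifs with h
  · subst h
    simp [Real.sq_sqrt hq.le]
  · have hp' : 0 < p := lt_of_le_of_ne hp (Ne.symm h)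
    have ha := Real.sqrt_pos.2 hp'
    have hb := Real.sqrt_pos.2 hq
    have ha2 := Real.sq_sqrt hp
    have hb2 := Real.sq_sqrt hq.le
    generalize √p = a at *
    generalize √q = b at *
    subst ha2 hb2
    have h1 := Real.log_le_sub_one_of_pos (div_pos hb ha)
    have h2 : Real.log (a ^ 2 / b ^ 2) = -2 * Real.log (b / a) := by
      rw [← div_pow, Real.log_pow, ← inv_div, Real.log_inv]
      push_cast
      ring
    have h3 : a ^ 2 * (b / a) = a * b := by
      field_simp
    rw [h2]
    nlinarith [mul_le_mul_of_nonneg_left h1 (sq_nonneg a)]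

/-- A Pinsker inequality with the non-sharp constant `4`. -/
lemma sq_sum_abs_sub_le_finKL {G : ℕ} {π π' : Fin G → ℝ}
    (hπ : ∀ i, 0 ≤ π i) (hπsum : ∑ i, π i = 1)
    (hπ' : ∀ i, 0 < π' i) (hπ'sum : ∑ i, π' i = 1) :
    (∑ i, |π i - π' i|) ^ 2 ≤ 4 * finKL G π π' := by
  have hellinger : ∑ i, (√(π i) - √(π' i)) ^ 2 ≤ finKL G π π' := by
    have h := Finset.sum_le_sum fun i (_ : i ∈ Finset.univ) =>
      sq_sqrt_sub_sqrt_le_klTerm (hπ i) (hπ' i)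
    rw [Finset.sum_add_distrib, Finset.sum_sub_distrib, hπsum, hπ'sum] at h
    simpa [finKL] using h
  have hplus : ∑ i, (√(π i) + √(π' i)) ^ 2 ≤ 4 := by
    calc ∑ i, (√(π i) + √(π' i)) ^ 2 ≤ ∑ i, (2 * π i + 2 * π' i) := by
          refine Finset.sum_le_sum fun i _ => ?_
          nlinarith [Real.sq_sqrt (hπ i), Real.sq_sqrt (hπ' i).le,
            sq_nonneg (√(π i) - √(π' i))]
      _ = 4 := by
          rw [Finset.sum_add_distrib, ← Finset.mul_sum, ← Finset.mul_sum, hπsum, hπ'sum]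
          norm_num
  have hfactor : ∀ i, |π i - π' i| = |√(π i) - √(π' i)| * (√(π i) + √(π' i)) := by
    intro i
    have hnn : 0 ≤ √(π i) + √(π' i) := by positivity
    rw [← abs_of_nonneg hnn, ← abs_mul]
    congr 1
    nlinarith [Real.sq_sqrt (hπ i), Real.sq_sqrt (hπ' i).le]
  have hcs := Finset.sum_mul_sq_le_sq_mul_sq Finset.univ
    (fun i => |√(π i) - √(π' i)|) (fun i => √(π i) + √(π' i))
  simp only [← hfactor, sq_abs] at hcs
  have hnn : 0 ≤ ∑ i, (√(π i) - √(π' i)) ^ 2 := Finset.sum_nonneg fun i _ => sq_nonneg _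
  nlinarith [mul_le_mul_of_nonneg_left hplus hnn]

/-- Lipschitz continuity via KL: for the unclipped uniform surrogate
`L(π) = (1/G)·∑ i, (Ahat i / πold i)·π i` with `πold i ≥ π_min > 0` and
`|Ahat i| ≤ A_max`, any two probability vectors `π, π'` with `π'` strictly positive
satisfy `|L(π) − L(π')| ≤ (A_max/π_min)·√(2·KL(π ‖ π'))`. -/
theorem surrogate_kl_lipschitz
    (G : ℕ) (hG : 1 ≤ G)
    (πold : Fin G → ℝ) (hold : ∀ i, 0 ≤ πold i) (hsumold : ∑ i, πold i = 1)
    (πmin : ℝ) (hπmin : 0 < πmin) (hfloor : ∀ i, πmin ≤ πold i)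
    (Ahat : Fin G → ℝ) (Amax : ℝ) (hAmax : ∀ i, |Ahat i| ≤ Amax)
    (π π' : Fin G → ℝ)
    (hπ : ∀ i, 0 ≤ π i) (hπsum : ∑ i, π i = 1)
    (hπ' : ∀ i, 0 < π' i) (hπ'sum : ∑ i, π' i = 1) :
    |(1 / (G : ℝ)) * ∑ i, (Ahat i / πold i) * π i
        - (1 / (G : ℝ)) * ∑ i, (Ahat i / πold i) * π' i|
      ≤ (Amax / πmin) * Real.sqrt (2 * finKL G π π') := by
  have hA : 0 ≤ Amax := (abs_nonneg _).trans (hAmax ⟨0, hG⟩)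
  have hC : 0 ≤ Amax / πmin := div_nonneg hA hπmin.le
  have hGpos : (0 : ℝ) < G := by exact_mod_cast hG
  have hl1 : (1 / (G : ℝ)) * ∑ i, |π i - π' i| ≤ √(2 * finKL G π π') := by
    have hpinsker := sq_sum_abs_sub_le_finKL hπ hπsum hπ' hπ'sum
    have hS : 0 ≤ ∑ i, |π i - π' i| := Finset.sum_nonneg fun i _ => abs_nonneg _
    rcases hG.eq_or_lt with rfl | hG2
    · simp only [Fin.sum_univ_one] at hπsum hπ'sum
      simp [hπsum, hπ'sum]
    · have hG2' : (2 : ℝ) ≤ G := by exact_mod_cast hG2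
      have hinv : 1 / (G : ℝ) ≤ 1 / 2 := one_div_le_one_div_of_le two_pos hG2'
      refine (mul_le_mul_of_nonneg_right hinv hS).trans (Real.le_sqrt_of_sq_le ?_)
      nlinarith [sq_nonneg (∑ i, |π i - π' i|)]
  have hcoef : ∀ i, |Ahat i / πold i| ≤ Amax / πmin := by
    intro i
    rw [abs_div, abs_of_nonneg (hold i)]
    exact div_le_div₀ hA (hAmax i) hπmin (hfloor i)
  have hsum : |∑ i, Ahat i / πold i * (π i - π' i)| ≤ (Amax / πmin) * ∑ i, |π i - π' i| := by
    rw [Finset.mul_sum]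
    refine (Finset.abs_sum_le_sum_abs _ _).trans (Finset.sum_le_sum fun i _ => ?_)
    rw [abs_mul]
    exact mul_le_mul_of_nonneg_right (hcoef i) (abs_nonneg _)
  rw [← mul_sub, ← Finset.sum_sub_distrib]
  simp only [← mul_sub]
  rw [abs_mul, abs_of_pos (one_div_pos.2 hGpos)]
  calc _ ≤ 1 / (G : ℝ) * ((Amax / πmin) * ∑ i, |π i - π' i|) :=
        mul_le_mul_of_nonneg_left hsum (one_div_pos.2 hGpos).le
    _ = (Amax / πmin) * ((1 / (G : ℝ)) * ∑ i, |π i - π' i|) := by ring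
    _ ≤ _ := mul_le_mul_of_nonneg_left hl1 hC
end

section
/- Let ε ∈ (0,1), c > 1, let ψ be the dual-clip kernel, let G ≥ 1, let π_old : Fin G → ℝ be a probability vector with π_old i ≥ π_min for some π_min > 0, let Â : Fin G → ℝ satisfy |Â i| ≤ A_max, and define J(π) = (1/G)·∑_i ψ(π i / π_old i, Â i). Then for any two probability vectors π, π' on Fin G, |J(π) − J(π')| ≤ (A_max/(G·π_min))·∑_i |π i − π' i|. -/
/-- The clipped (RIFT) surrogate `J(π) = (1/G)·∑ i, ψ(π i / πold i, Ahat i)`. -/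
noncomputable def riftJ (ε c : ℝ) (G : ℕ) (πold Ahat π : Fin G → ℝ) : ℝ :=
  (1 / (G : ℝ)) * ∑ i, dualClipKernel ε c (π i / πold i) (Ahat i)

/-- Clipping is 1-Lipschitz in the ratio. -/
lemma abs_clipRatio_sub_le (x y a b : ℝ) :
    |clipRatio x a b - clipRatio y a b| ≤ |x - y| := by
  unfold clipRatio
  have h1 := abs_max_sub_max_le_max a (min x b) a (min y b)
  have h2 := abs_min_sub_min_le_max x b y b
  simp only [sub_self, abs_zero, abs_nonneg, sup_of_le_left, sup_of_le_right] at h1 h2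
  exact h1.trans h2

/-- The kernel is `|A|`-Lipschitz in the ratio, whatever the clipping parameters. -/
lemma abs_dualClipKernel_sub_le (ε c x y A : ℝ) :
    |dualClipKernel ε c x A - dualClipKernel ε c y A| ≤ |A| * |x - y| := by
  have hmin : |min (x * A) (clipRatio x (1 - ε) (1 + ε) * A)
      - min (y * A) (clipRatio y (1 - ε) (1 + ε) * A)| ≤ |A| * |x - y| := by
    refine (abs_min_sub_min_le_max _ _ _ _).trans (max_le ?_ ?_)
    · rw [← sub_mul, abs_mul, mul_comm]
    · rw [← sub_mul, abs_mul, mul_comm]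
      exact mul_le_mul_of_nonneg_left (abs_clipRatio_sub_le _ _ _ _) (abs_nonneg A)
  unfold dualClipKernel
  split_ifs
  · exact hmin
  · refine (abs_max_sub_max_le_max _ _ _ _).trans (max_le hmin ?_)
    rw [sub_self, abs_zero]
    positivity

/-- ℓ¹-Lipschitz continuity of the clipped surrogate: with
`πold i ≥ π_min > 0` and `|Ahat i| ≤ A_max`, any two probability vectors `π, π'`
satisfy `|J(π) − J(π')| ≤ (A_max/(G·π_min))·∑ |π i − π' i|`. -/
theorem rift_l1_lipschitz
    (ε c : ℝ) (hε : ε ∈ Set.Ioo (0 : ℝ) 1) (hc : 1 < c)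
    (G : ℕ) (hG : 1 ≤ G)
    (πold : Fin G → ℝ) (hold : ∀ i, 0 ≤ πold i) (hsumold : ∑ i, πold i = 1)
    (πmin : ℝ) (hπmin : 0 < πmin) (hfloor : ∀ i, πmin ≤ πold i)
    (Ahat : Fin G → ℝ) (Amax : ℝ) (hAmax : ∀ i, |Ahat i| ≤ Amax)
    (π π' : Fin G → ℝ)
    (hπ : ∀ i, 0 ≤ π i) (hπsum : ∑ i, π i = 1)
    (hπ' : ∀ i, 0 ≤ π' i) (hπ'sum : ∑ i, π' i = 1) :
    |riftJ ε c G πold Ahat π - riftJ ε c G πold Ahat π'|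
      ≤ (Amax / ((G : ℝ) * πmin)) * ∑ i, |π i - π' i| := by
  have hGpos : (0 : ℝ) < G := by exact_mod_cast hG
  have hterm : ∀ i, |dualClipKernel ε c (π i / πold i) (Ahat i)
      - dualClipKernel ε c (π' i / πold i) (Ahat i)| ≤ Amax / πmin * |π i - π' i| := by
    intro i
    have hpos : 0 < πold i := hπmin.trans_le (hfloor i)
    have hA : 0 ≤ Amax := (abs_nonneg _).trans (hAmax i)
    calc _ ≤ |Ahat i| * |π i / πold i - π' i / πold i| := abs_dualClipKernel_sub_le _ _ _ _ _
      _ = |Ahat i| / πold i * |π i - π' i| := by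
          rw [← sub_div, abs_div, abs_of_pos hpos]; ring
      _ ≤ Amax / πmin * |π i - π' i| :=
          mul_le_mul_of_nonneg_right (div_le_div₀ hA (hAmax i) hπmin (hfloor i)) (abs_nonneg _)
  unfold riftJ
  rw [← mul_sub, ← Finset.sum_sub_distrib, abs_mul, abs_of_pos (one_div_pos.mpr hGpos)]
  calc _ ≤ 1 / (G : ℝ) * ∑ i, Amax / πmin * |π i - π' i| :=
        mul_le_mul_of_nonneg_left
          ((Finset.abs_sum_le_sum_abs _ _).trans (Finset.sum_le_sum fun i _ => hterm i))
          (one_div_pos.mpr hGpos).le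
    _ = _ := by
        rw [← Finset.mul_sum]
        field_simp
end

section
/- Let ε ∈ (0,1), c > 1, let ψ be the dual-clip kernel, let G ≥ 1, let π_old : Fin G → ℝ be a probability vector with π_old i ≥ π_min for some π_min > 0, let Â : Fin G → ℝ satisfy |Â i| ≤ A_max, and define J(π) = (1/G)·∑_i ψ(π i / π_old i, Â i). Then for any two probability vectors π, π' on Fin G with π' strictly positive, |J(π) − J(π')| ≤ (A_max/π_min)·√(2·KL(π ‖ π')), where KL(π ‖ π') = ∑_i π i · log(π i / π' i) with the convention that a term is 0 when π i = 0. -/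
lemma two_mul_sub_one_le_mul_log {t : ℝ} (ht : 1 ≤ t) : 2 * (t - 1) ≤ (t + 1) * Real.log t := by
  have h := Real.le_log_one_add_of_nonneg (sub_nonneg.2 ht)
  rw [div_le_iff₀ (by linarith), add_sub_cancel] at h
  linarith

/-- The reverse of `two_mul_sub_one_le_mul_log` on `(0, 1]`, obtained by replacing `t` by `t⁻¹`. -/
lemma mul_log_le_two_mul_sub_one {t : ℝ} (h0 : 0 < t) (ht : t ≤ 1) :
    (t + 1) * Real.log t ≤ 2 * (t - 1) := by
  have h := two_mul_sub_one_le_mul_log ((one_le_inv₀ h0).2 ht)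
  rw [Real.log_inv] at h
  have h' := mul_le_mul_of_nonneg_left h h0.le
  have e : t * t⁻¹ = 1 := mul_inv_cancel₀ h0.ne'
  have e1 : t * (2 * (t⁻¹ - 1)) = 2 * (1 - t) := by linear_combination 2 * e
  have e2 : t * ((t⁻¹ + 1) * -Real.log t) = -((t + 1) * Real.log t) := by
    linear_combination (-Real.log t) * e
  linarith

/-- The gap between the two sides is minimal at `t = 1`: its derivative
`4 * ((t + 1) * log t - 2 * (t - 1))` has the sign of `t - 1`. -/
lemma three_mul_sq_le {t : ℝ} (ht : 0 ≤ t) :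
    3 * (t - 1) ^ 2 ≤ (2 * t + 4) * (t * Real.log t - t + 1) := by
  rcases ht.eq_or_lt with rfl | h0
  · norm_num
  set f : ℝ → ℝ := fun t => (2 * t + 4) * (t * Real.log t - t + 1) - 3 * (t - 1) ^ 2 with hf
  have hd : ∀ x : ℝ, 0 < x → HasDerivAt f (4 * ((x + 1) * Real.log x - 2 * (x - 1))) x := by
    intro x hx
    have h1 : HasDerivAt (fun t : ℝ => 2 * t + 4) 2 x := by
      simpa using ((hasDerivAt_id x).const_mul 2).add_const 4
    have h2 : HasDerivAt (fun t : ℝ => t * Real.log t - t + 1) (Real.log x + 1 - 1) x :=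
      ((Real.hasDerivAt_mul_log hx.ne').sub (hasDerivAt_id x)).add_const 1
    have h3 : HasDerivAt (fun t : ℝ => 3 * (t - 1) ^ 2) (3 * (2 * (x - 1))) x := by
      simpa using (((hasDerivAt_id x).sub_const 1).pow 2).const_mul 3
    refine ((h1.mul h2).sub h3).congr_deriv ?_
    ring
  have hf1 : f 1 = 0 := by simp [hf]
  suffices f 1 ≤ f t by
    rw [hf1] at this
    exact sub_nonneg.1 this
  rcases le_total 1 t with h | h
  · refine monotoneOn_of_deriv_nonneg (convex_Icc 1 t) ?_ ?_ ?_ (Set.left_mem_Icc.2 h)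
      (Set.right_mem_Icc.2 h) h
    · exact fun x hx => (hd x (by linarith [hx.1])).continuousAt.continuousWithinAt
    · intro x hx
      rw [interior_Icc] at hx
      exact (hd x (by linarith [hx.1])).differentiableAt.differentiableWithinAt
    · intro x hx
      rw [interior_Icc] at hx
      rw [(hd x (by linarith [hx.1])).deriv]
      linarith [two_mul_sub_one_le_mul_log hx.1.le]
  · refine antitoneOn_of_deriv_nonpos (convex_Icc t 1) ?_ ?_ ?_ (Set.left_mem_Icc.2 h)
      (Set.right_mem_Icc.2 h) h
    · exact fun x hx => (hd x (by linarith [hx.1])).continuousAt.continuousWithinAt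
    · intro x hx
      rw [interior_Icc] at hx
      exact (hd x (by linarith [hx.1])).differentiableAt.differentiableWithinAt
    · intro x hx
      rw [interior_Icc] at hx
      rw [(hd x (by linarith [hx.1])).deriv]
      linarith [mul_log_le_two_mul_sub_one (h0.trans hx.1) hx.2.le]

/-- `three_mul_sq_le` at `t = p / q`, with denominators cleared. -/
lemma sq_sub_le {p q : ℝ} (hp : 0 ≤ p) (hq : 0 < q) :
    (p - q) ^ 2 ≤ ((2 * p + 4 * q) / 3) * (p * Real.log (p / q) - p + q) := by
  have h := three_mul_sq_le (div_nonneg hp hq.le)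
  have e : p / q * q = p := div_mul_cancel₀ p hq.ne'
  generalize p / q = t at h e
  subst e
  have h' := mul_le_mul_of_nonneg_left h (sq_nonneg q)
  linarith

/-- Pinsker's inequality on a finite alphabet. -/
lemma sq_sum_abs_sub_le (G : ℕ) (π π' : Fin G → ℝ)
    (hπ : ∀ i, 0 ≤ π i) (hπsum : ∑ i, π i = 1)
    (hπ' : ∀ i, 0 < π' i) (hπ'sum : ∑ i, π' i = 1) :
    (∑ i, |π i - π' i|) ^ 2 ≤ 2 * finKL G π π' := by
  have hw : ∀ i, 0 < (2 * π i + 4 * π' i) / 3 := fun i => by linarith [hπ i, hπ' i]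
  have hkl : finKL G π π' = ∑ i, (π i * Real.log (π i / π' i) - π i + π' i) := by
    rw [Finset.sum_add_distrib, Finset.sum_sub_distrib, hπsum, hπ'sum, sub_add_cancel]
    refine Finset.sum_congr rfl fun i _ => ?_
    split_ifs with h
    · simp [h]
    · rfl
  have hwsum : ∑ i, (2 * π i + 4 * π' i) / 3 = 2 := by
    rw [← Finset.sum_div, Finset.sum_add_distrib, ← Finset.mul_sum, ← Finset.mul_sum, hπsum,
      hπ'sum]
    norm_num
  rw [hkl, ← hwsum]
  refine Finset.sum_sq_le_sum_mul_sum_of_sq_le_mul _ (fun i _ => (hw i).le) (fun i _ => ?_)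
    (fun i _ => ?_)
  · exact nonneg_of_mul_nonneg_right ((sq_nonneg _).trans (sq_sub_le (hπ i) (hπ' i))) (hw i)
  · rw [sq_abs]
    exact sq_sub_le (hπ i) (hπ' i)

/-- Lipschitz continuity of the clipped surrogate via KL: with
`πold i ≥ π_min > 0` and `|Ahat i| ≤ A_max`, any two probability vectors `π, π'`
with `π'` strictly positive satisfy
`|J(π) − J(π')| ≤ (A_max/π_min)·√(2·KL(π ‖ π'))`. -/
theorem rift_kl_lipschitz
    (ε c : ℝ) (hε : ε ∈ Set.Ioo (0 : ℝ) 1) (hc : 1 < c)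
    (G : ℕ) (hG : 1 ≤ G)
    (πold : Fin G → ℝ) (hold : ∀ i, 0 ≤ πold i) (hsumold : ∑ i, πold i = 1)
    (πmin : ℝ) (hπmin : 0 < πmin) (hfloor : ∀ i, πmin ≤ πold i)
    (Ahat : Fin G → ℝ) (Amax : ℝ) (hAmax : ∀ i, |Ahat i| ≤ Amax)
    (π π' : Fin G → ℝ)
    (hπ : ∀ i, 0 ≤ π i) (hπsum : ∑ i, π i = 1)
    (hπ' : ∀ i, 0 < π' i) (hπ'sum : ∑ i, π' i = 1) :
    |riftJ ε c G πold Ahat π - riftJ ε c G πold Ahat π'|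
      ≤ (Amax / πmin) * Real.sqrt (2 * finKL G π π') := by
  have hA : 0 ≤ Amax := (abs_nonneg _).trans (hAmax ⟨0, hG⟩)
  have hG1 : (1 : ℝ) ≤ G := by exact_mod_cast hG
  have hterm : ∀ i, |dualClipKernel ε c (π i / πold i) (Ahat i)
      - dualClipKernel ε c (π' i / πold i) (Ahat i)| ≤ Amax / πmin * |π i - π' i| := by
    intro i
    have hpos : 0 < πold i := hπmin.trans_le (hfloor i)
    refine (abs_dualClipKernel_sub_le _ _ _ _ _).trans ?_
    rw [← sub_div, abs_div, abs_of_pos hpos, div_mul_eq_mul_div, ← mul_div_assoc]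
    exact div_le_div₀ (mul_nonneg hA (abs_nonneg _))
      (mul_le_mul_of_nonneg_right (hAmax i) (abs_nonneg _)) hπmin (hfloor i)
  calc |riftJ ε c G πold Ahat π - riftJ ε c G πold Ahat π'|
      = 1 / (G : ℝ) * |∑ i, (dualClipKernel ε c (π i / πold i) (Ahat i)
          - dualClipKernel ε c (π' i / πold i) (Ahat i))| := by
        unfold riftJ
        rw [← mul_sub, ← Finset.sum_sub_distrib, abs_mul, abs_of_nonneg (by positivity)]
    _ ≤ 1 * |∑ i, (dualClipKernel ε c (π i / πold i) (Ahat i)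
          - dualClipKernel ε c (π' i / πold i) (Ahat i))| :=
        mul_le_mul_of_nonneg_right ((div_le_one (by linarith)).2 hG1) (abs_nonneg _)
    _ ≤ ∑ i, Amax / πmin * |π i - π' i| := by
        rw [one_mul]
        exact (Finset.abs_sum_le_sum_abs _ _).trans (Finset.sum_le_sum fun i _ => hterm i)
    _ = Amax / πmin * ∑ i, |π i - π' i| := by rw [Finset.mul_sum]
    _ ≤ Amax / πmin * Real.sqrt (2 * finKL G π π') :=
        mul_le_mul_of_nonneg_left
          (Real.le_sqrt_of_sq_le (sq_sum_abs_sub_le G π π' hπ hπsum hπ' hπ'sum))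
          (div_nonneg hA hπmin.le)
end
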